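/- arXiv:2507.15192 — 7 statements merged into one kernel-verified Lean document; each statement's English description precedes it below -/
import Mathlib

section
/- For all real μ ∈ [0, 1/3] and Y ∈ [0, 2], one has h_DtP(Y, μ) := (1 + 2Yμ(μ−1))² (1 + 2Yμ(μ+1)) ≤ 1. (Stability of the Lie–Trotter projector-splitting integrator in the discretize-then-project approach, with upwind finite differences in space and forward Euler in time, for the hyperbolic system ∂_t u + a(v)∂_x u = 0, under the CFL condition λ_max Δt/Δx ≤ 1/3.) -/
/-- Stability of the DtP Lie–Trotter projector-splitting integrator under the
CFL condition `μ ≤ 1/3`. -/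
theorem psi_stability_stmt_6
    (μ Y : ℝ) (hμ : μ ∈ Set.Icc (0 : ℝ) (1 / 3)) (hY : Y ∈ Set.Icc (0 : ℝ) 2) :
    (1 + 2 * Y * μ * (μ - 1)) ^ 2 * (1 + 2 * Y * μ * (μ + 1)) ≤ 1 := by
  obtain ⟨h0, h1⟩ := hμ
  obtain ⟨hY0, hY2⟩ := hY
  -- With `x = 2Yμ ∈ [0, 4μ]`, the left side minus `1` equals
  -- `-x ((1 - 3μ) + x (1 - μ) ((1 + 3μ) - x (1 - μ²)))`, and each factor is nonnegative.
  obtain ⟨x, hx⟩ : ∃ x, x = 2 * Y * μ := ⟨_, rfl⟩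
  have hx0 : 0 ≤ x := by rw [hx]; positivity
  have hx4 : x ≤ 4 * μ := by rw [hx]; nlinarith
  rw [← hx]
  -- `x (1 - μ²) ≤ x ≤ 4μ ≤ 1 + 3μ`
  have hc : 0 ≤ (1 + 3 * μ) - x * (1 - μ ^ 2) := by
    nlinarith [mul_nonneg hx0 (sq_nonneg μ)]
  have hd : 0 ≤ x * (1 - μ) := mul_nonneg hx0 (by linarith)
  have key : 0 ≤ x * ((1 - 3 * μ) + x * (1 - μ) * ((1 + 3 * μ) - x * (1 - μ ^ 2))) :=
    mul_nonneg hx0 (add_nonneg (by linarith) (mul_nonneg hd hc))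
  linarith [key]
end

section
/- For every fixed μ ∈ [0, 1/3], the function Y ↦ h_DtP(Y, μ) := (1 + 2Yμ(μ−1))² (1 + 2Yμ(μ+1)) is nonincreasing (antitone) on the interval [0, 2]. -/
/-!
With `a = 2μ(1 - μ)` and `b = 2μ(1 + μ)` the function is `f Y = (1 - aY)² (1 + bY)`. For `x ≤ y`,
writing `p = 1 - ax` and `q = 1 - ay`, the difference factors as
`f x - f y = (y - x) (a (p + q) (1 + bx) - b q²)`.
The second factor is nonnegative because `0 ≤ q ≤ 1`, `q ≤ p` and `b ≤ 2a`, so that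
`b q² ≤ b q ≤ 2 a q ≤ a (p + q) ≤ a (p + q) (1 + bx)`.
-/

/-- For fixed `μ ∈ [0, 1/3]`, the DtP squared amplification modulus is
nonincreasing in `Y` on `[0, 2]`. -/
theorem psi_stability_stmt_7
    (μ : ℝ) (hμ : μ ∈ Set.Icc (0 : ℝ) (1 / 3)) :
    AntitoneOn
      (fun Y : ℝ => (1 + 2 * Y * μ * (μ - 1)) ^ 2 * (1 + 2 * Y * μ * (μ + 1)))
      (Set.Icc (0 : ℝ) 2) := by
  obtain ⟨h0, h1⟩ := hμ
  rintro x ⟨hx0, hx2⟩ y ⟨hy0, hy2⟩ hxy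
  obtain ⟨a, ha⟩ : ∃ a, a = 2 * μ * (1 - μ) := ⟨_, rfl⟩
  obtain ⟨b, hb⟩ : ∃ b, b = 2 * μ * (1 + μ) := ⟨_, rfl⟩
  have ha0 : 0 ≤ a := by rw [ha]; nlinarith
  have hb0 : 0 ≤ b := by rw [hb]; positivity
  -- `2 * a - b = 2 * μ * (1 - 3 * μ)`: this is where `μ ≤ 1 / 3` is sharp.
  have hba : b ≤ 2 * a := by rw [ha, hb]; nlinarith
  have ha1 : a ≤ 1 / 2 := by rw [ha]; nlinarith [sq_nonneg (2 * μ - 1)]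
  have hq0 : 0 ≤ 1 - a * y := by nlinarith
  have hq1 : 1 - a * y ≤ 1 := by nlinarith
  have hpq : 1 - a * y ≤ 1 - a * x := by nlinarith
  have key : b * (1 - a * y) ^ 2 ≤ a * ((1 - a * x) + (1 - a * y)) * (1 + b * x) :=
    calc b * (1 - a * y) ^ 2 ≤ b * (1 - a * y) := by
          gcongr; nlinarith
      _ ≤ 2 * a * (1 - a * y) := by gcongr
      _ ≤ a * ((1 - a * x) + (1 - a * y)) := by nlinarith
      _ ≤ a * ((1 - a * x) + (1 - a * y)) * (1 + b * x) := by
          apply le_mul_of_one_le_right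
          · apply mul_nonneg ha0; linarith
          · nlinarith [mul_nonneg hb0 hx0]
  have hform : ∀ Y : ℝ, (1 + 2 * Y * μ * (μ - 1)) ^ 2 * (1 + 2 * Y * μ * (μ + 1))
      = (1 - a * Y) ^ 2 * (1 + b * Y) := by
    intro Y; rw [ha, hb]; ring
  simp only [hform]
  -- The difference of the values at `x` and `y` is `y - x` times the gap in `key`.
  linarith [mul_nonneg (sub_nonneg.2 hxy) (sub_nonneg.2 key)]
end

section
/- For every fixed real μ > 1/3, there exists Y ∈ (0, 2) such that h_DtP(Y, μ) := (1 + 2Yμ(μ−1))² (1 + 2Yμ(μ+1)) > 1. (Instability of the DtP Lie–Trotter projector-splitting scheme when the CFL number exceeds 1/3.) -/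
/-! Write `a = 2μ(μ-1)` and `b = 2μ(μ+1) > 0`, so that
`(1 + aY)² (1 + bY) = 1 + Y ((2a + b) + (a² + 2ab) Y + a² b Y²)` with
`2a + b = 2μ(3μ-1) > 0`. If `μ ≥ 1`, then `a ≥ 0` and any `Y` works. If `μ < 1`, then only the
term `2ab Y = -8μ²(1-μ²) Y` in the second factor is negative, and `Y = (3μ-1)/2` is small enough
for `2a + b` to dominate it, because `2μ(1-μ²) < 1`. -/

/-- Instability of the DtP Lie–Trotter projector-splitting scheme when the CFL
number exceeds `1/3`. -/
theorem psi_stability_stmt_8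
    (μ : ℝ) (hμ : 1 / 3 < μ) :
    ∃ Y ∈ Set.Ioo (0 : ℝ) 2,
      1 < (1 + 2 * Y * μ * (μ - 1)) ^ 2 * (1 + 2 * Y * μ * (μ + 1)) := by
  have hpos : 0 < μ := by linarith
  rcases le_or_gt 1 μ with h1 | h1
  · refine ⟨1, by norm_num, ?_⟩
    have ha : 0 ≤ 2 * 1 * μ * (μ - 1) := mul_nonneg (by linarith) (by linarith)
    have hb : 0 < 2 * 1 * μ * (μ + 1) := by positivity
    nlinarith [mul_nonneg (sq_nonneg (2 * 1 * μ * (μ - 1))) hb.le, mul_nonneg ha hb.le]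
  · obtain ⟨Y, hY⟩ : ∃ Y, Y = (3 * μ - 1) / 2 := ⟨_, rfl⟩
    have hY0 : 0 < Y := by linarith
    refine ⟨Y, ⟨hY0, by linarith⟩, ?_⟩
    -- The minimum of `1 - 2μ + 2μ³` over `μ > 0` is attained at `1/√3`, which is close to `3/5`;
    -- the hint is the tangent-line bound for `μ³` at `3/5`.
    have hc : 0 < 1 - 2 * μ * (1 - μ ^ 2) := by
      nlinarith [mul_nonneg (sq_nonneg (μ - 3 / 5)) (by linarith : 0 ≤ μ + 6 / 5)]
    have hlin : 0 < Y ^ 2 * (4 * μ) * (1 - 2 * μ * (1 - μ ^ 2)) := by positivity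
    have hrest : 0 ≤ (2 * μ * (μ - 1)) ^ 2 * Y ^ 2 * (1 + 2 * μ * (μ + 1) * Y) := by positivity
    have key : (1 + 2 * Y * μ * (μ - 1)) ^ 2 * (1 + 2 * Y * μ * (μ + 1)) - 1
        = Y ^ 2 * (4 * μ) * (1 - 2 * μ * (1 - μ ^ 2))
          + (2 * μ * (μ - 1)) ^ 2 * Y ^ 2 * (1 + 2 * μ * (μ + 1) * Y) := by
      rw [hY]; ring
    linarith
end

section
/- For all real μ ∈ [0, 1/3] and Y ∈ [0, 2], one has h_PtD(Y, μ) := (1 + 2Yμ(μ−1)) (1 + μ² Y (2 − Y))² ≤ 1. (Stability of the Lie–Trotter projector-splitting integrator in the project-then-discretize approach, with upwind finite differences in the K-step, central finite differences in the S- and L-steps, and forward Euler in time, for the hyperbolic system ∂_t u + a(v)∂_x u = 0, under the CFL condition λ_max Δt/Δx ≤ 1/3.) -/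
/-- Stability of the PtD Lie–Trotter projector-splitting integrator under the
CFL condition `μ ≤ 1/3`. -/
theorem psi_stability_stmt_11
    (μ Y : ℝ) (hμ : μ ∈ Set.Icc (0 : ℝ) (1 / 3)) (hY : Y ∈ Set.Icc (0 : ℝ) 2) :
    (1 + 2 * Y * μ * (μ - 1)) * (1 + μ ^ 2 * Y * (2 - Y)) ^ 2 ≤ 1 := by
  obtain ⟨hμ0, hμ1⟩ := hμ
  obtain ⟨hY0, hY2⟩ := hY
  have ht : 0 ≤ μ ^ 2 * Y * (2 - Y) :=
    mul_nonneg (by positivity) (by linarith)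
  -- With `t = μ²Y(2 - Y)`, the first factor is at most `1 - 2t`: after division by `2Yμ` this
  -- says `μ(2 - Y) ≤ 1 - μ`, which follows from `3μ ≤ 1`.
  have hfac : 1 + 2 * Y * μ * (μ - 1) ≤ 1 - 2 * (μ ^ 2 * Y * (2 - Y)) := by
    have h : 0 ≤ 1 - μ - μ * (2 - Y) := by nlinarith [mul_nonneg hμ0 hY0]
    have := mul_nonneg (mul_nonneg hY0 hμ0) h
    linarith
  generalize μ ^ 2 * Y * (2 - Y) = t at ht hfac ⊢
  calc (1 + 2 * Y * μ * (μ - 1)) * (1 + t) ^ 2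
      ≤ (1 - 2 * t) * (1 + t) ^ 2 := by gcongr
    _ = 1 - (3 * t ^ 2 + 2 * t ^ 3) := by ring
    _ ≤ 1 := sub_le_self _ (by positivity)
end

section
/- For all real μ ∈ [0, 1/3] and Y ∈ [0, 2], the quadratic g(Y) := (3μ − 1) + 2μ(3μ² − 3μ − 1) Y + 5μ²(1 − μ) Y² satisfies g(Y) ≤ 0. -/
/-- The quadratic factor `g(Y)` in `∂h_PtD/∂Y` is nonpositive on `[0,2]` for
`μ ∈ [0, 1/3]`. -/
theorem psi_stability_stmt_12
    (μ Y : ℝ) (hμ : μ ∈ Set.Icc (0 : ℝ) (1 / 3)) (hY : Y ∈ Set.Icc (0 : ℝ) 2) :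
    (3 * μ - 1) + 2 * μ * (3 * μ ^ 2 - 3 * μ - 1) * Y
      + 5 * μ ^ 2 * (1 - μ) * Y ^ 2 ≤ 0 := by
  obtain ⟨h0, h1⟩ := hμ
  obtain ⟨hY0, hY2⟩ := hY
  -- `g` is convex in `Y` (leading coefficient `5μ²(1 - μ) ≥ 0`), so it lies below its chord
  -- on `[0, 2]`, and it suffices that `g 0 = 3μ - 1` and `g 2` are nonpositive.
  have g0 : 3 * μ - 1 ≤ 0 := by linarith
  have g2 : -1 - μ + 8 * μ ^ 2 - 8 * μ ^ 3 ≤ 0 := by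
    have hsq : μ ^ 2 ≤ (1 / 3) ^ 2 := pow_le_pow_left₀ h0 h1 2
    have hcube : 0 ≤ μ ^ 3 := pow_nonneg h0 3
    linarith
  have hc : 0 ≤ 5 * μ ^ 2 * (1 - μ) := mul_nonneg (by positivity) (by linarith)
  have e0 := mul_nonneg (sub_nonneg.2 hY2) (neg_nonneg.2 g0)
  have e2 := mul_nonneg hY0 (neg_nonneg.2 g2)
  have ec := mul_nonneg hc (mul_nonneg hY0 (sub_nonneg.2 hY2))
  linarith
end

section
/- For every fixed real μ > 1/3, there exists Y ∈ (0, 2) such that h_PtD(Y, μ) := (1 + 2Yμ(μ−1)) (1 + μ² Y (2 − Y))² > 1. (Instability of the PtD Lie–Trotter projector-splitting scheme when the CFL number exceeds 1/3.) -/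
/-!
At `Y = 0` the function equals `1` and its slope in `Y` is `2 * μ * (3 * μ - 1) > 0`, so it
exceeds `1` for small `Y > 0`. For `μ < 1` this is made explicit: with `a = 2 * μ * (1 - μ)`,
`b = μ ^ 2` and Bernoulli's inequality `(1 + t) ^ 2 ≥ 1 + 2 * t`, the function is at least
`(1 - a * Y) * (1 + 2 * b * Y * (2 - Y)) = 1 + Y * (4 * b - a - r)`, where the remainder
`r = 2 * b * Y + 2 * a * b * Y * (2 - Y)` is at most `4 * Y` because `a ≤ 1 / 2` and `b ≤ 1`.
Half the slope as the value of `4 * Y` then suffices. For `μ ≥ 1` the point `Y = 1` works.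
-/

/-- Instability of the PtD Lie–Trotter projector-splitting scheme when the CFL
number exceeds `1/3`. -/
theorem psi_stability_stmt_13
    (μ : ℝ) (hμ : 1 / 3 < μ) :
    ∃ Y ∈ Set.Ioo (0 : ℝ) 2,
      1 < (1 + 2 * Y * μ * (μ - 1)) * (1 + μ ^ 2 * Y * (2 - Y)) ^ 2 := by
  rcases le_or_gt 1 μ with h | h
  · refine ⟨1, by norm_num, ?_⟩
    have h1 : 0 ≤ μ * (μ - 1) := mul_nonneg (by linarith) (by linarith)
    have h2 : 1 < (1 + μ ^ 2 * 1 * (2 - 1)) ^ 2 := by nlinarith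
    nlinarith
  · have hs : 0 < μ * (3 * μ - 1) := mul_pos (by linarith) (by linarith)
    obtain ⟨Y, hY⟩ : ∃ Y, Y = μ * (3 * μ - 1) / 4 := ⟨_, rfl⟩
    have hY0 : 0 < Y := by linarith
    have hY1 : Y < 1 := by nlinarith
    refine ⟨Y, ⟨hY0, by linarith⟩, ?_⟩
    obtain ⟨a, ha⟩ : ∃ a, a = 2 * μ * (1 - μ) := ⟨_, rfl⟩
    obtain ⟨b, hb⟩ : ∃ b, b = μ ^ 2 := ⟨_, rfl⟩
    have ha0 : 0 ≤ a := by nlinarith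
    have ha1 : a ≤ 1 / 2 := by nlinarith [sq_nonneg (2 * μ - 1)]
    have hb0 : 0 ≤ b := by nlinarith
    have hb1 : b ≤ 1 := by nlinarith
    have hslope : 4 * b - a = 8 * Y := by rw [ha, hb, hY]; ring
    have hr : b * (2 + 2 * a * (2 - Y)) ≤ 4 := by
      have h1 : a * (2 - Y) ≤ 1 := by nlinarith
      have h2 : 0 ≤ a * (2 - Y) := mul_nonneg ha0 (by linarith)
      nlinarith
    have haY : 0 ≤ 1 - a * Y := by nlinarith
    calc (1 : ℝ) < 1 + Y * (4 * b - a - Y * (b * (2 + 2 * a * (2 - Y)))) := by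
          have : 0 < 4 * b - a - Y * (b * (2 + 2 * a * (2 - Y))) := by nlinarith
          nlinarith [mul_pos hY0 this]
      _ = (1 - a * Y) * (1 + 2 * (b * Y * (2 - Y))) := by ring
      _ ≤ (1 - a * Y) * (1 + b * Y * (2 - Y)) ^ 2 :=
          mul_le_mul_of_nonneg_left (by nlinarith [sq_nonneg (b * Y * (2 - Y))]) haY
      _ = (1 + 2 * Y * μ * (μ - 1)) * (1 + μ ^ 2 * Y * (2 - Y)) ^ 2 := by
          rw [ha, hb]; ring
end

section
/- For all real x ≥ 0, one has (1 − x)²(1 + x) ≤ 1 if and only if x ≤ (1 + √5)/2. (Consequently the Lie–Trotter projector-splitting integrator with forward Euler time stepping in each substep for the parabolic system, whose total amplification factor is G(x) = (1 − x)²(1 + x), satisfies |G(x)| ≤ 1 exactly when x ≤ (1 + √5)/2, giving the CFL condition ν ≤ (1 + √5)/8.) -/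
/-- Stability condition for the Lie–Trotter projector-splitting integrator with
forward Euler in each substep for the parabolic system:
`(1-x)²(1+x) ≤ 1 ↔ x ≤ (1 + √5)/2`, equivalently the amplification factor
`(1-x)²(1+x)` has modulus at most 1 exactly on that range. -/
theorem psi_stability_stmt_18
    (x : ℝ) (hx : 0 ≤ x) :
    ((1 - x) ^ 2 * (1 + x) ≤ 1 ↔ x ≤ (1 + Real.sqrt 5) / 2) ∧
    (|(1 - x) ^ 2 * (1 + x)| ≤ 1 ↔ x ≤ (1 + Real.sqrt 5) / 2) := by
  -- With `φ = (1 + √5)/2`, `G(x) - 1 = x (x - φ) (x - (1 - √5)/2)`, and the last factor is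
  -- positive for `x ≥ 0`; moreover `G(x) ≥ 0` there, so the absolute value changes nothing.
  have h5 : Real.sqrt 5 ^ 2 = 5 := Real.sq_sqrt (by norm_num)
  have h1 : 1 < Real.sqrt 5 := Real.lt_sqrt_of_sq_lt (by norm_num)
  have hψ : 0 < x - (1 - Real.sqrt 5) / 2 := by linarith
  have hG : (1 - x) ^ 2 * (1 + x) - 1
      = x * (x - (1 - Real.sqrt 5) / 2) * (x - (1 + Real.sqrt 5) / 2) := by
    linear_combination (x / 4) * h5
  have key : (1 - x) ^ 2 * (1 + x) ≤ 1 ↔ x ≤ (1 + Real.sqrt 5) / 2 := by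
    constructor
    · intro h
      by_contra! hlt
      have hx0 : 0 < x := by linarith
      have := mul_pos (mul_pos hx0 hψ) (sub_pos.mpr hlt)
      linarith
    · intro h
      have := mul_nonpos_of_nonneg_of_nonpos (mul_nonneg hx hψ.le) (sub_nonpos.mpr h)
      linarith
  have h0 : 0 ≤ (1 - x) ^ 2 * (1 + x) := by positivity
  exact ⟨key, by rwa [abs_of_nonneg h0]⟩
end
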